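/- In a DMC, if u and u' are both maximal steps at the global state s, then loc(u) = loc(u') and |u| = |u'|. -/

import Mathlib

/-- A probabilistic asynchronous system over agents `{1,…,n}` with local state
spaces `S i`, actions `A`, locations `loc`, enabling sets `en` and probabilistic
transition functions `prob`. -/
structure PAS (n : ℕ) (A : Type) (S : Fin n → Type) [Fintype A] [∀ i, Fintype (S i)] where
  loc : A → Finset (Fin n)
  loc_nonempty : ∀ a, (loc a).Nonempty
  en : ∀ a : A, Set (∀ i : {j // j ∈ loc a}, S i.1)
  prob : ∀ a : A, (∀ i : {j // j ∈ loc a}, S i.1) → (∀ i : {j // j ∈ loc a}, S i.1) → ℝ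
  prob_nonneg : ∀ a v v', v ∈ en a → 0 ≤ prob a v v'
  prob_sum : ∀ a v, v ∈ en a →
    ∑ v' : (∀ i : {j // j ∈ loc a}, S i.1), prob a v v' = 1

namespace PAS

variable {n : ℕ} {A : Type} {S : Fin n → Type} [Fintype A] [∀ i, Fintype (S i)]

/-- Projection of a global state to an `a`-state. -/
def projA (P : PAS n A S) (a : A) (s : ∀ i, S i) : ∀ i : {j // j ∈ P.loc a}, S i.1 :=
  fun i => s i.1

/-- Action `a` is enabled at global state `s`. -/
def enabledA (P : PAS n A S) (a : A) (s : ∀ i, S i) : Prop := P.projA a s ∈ P.en a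

/-- An event `(v, a, v')` with `v ∈ en a` and `π^a(v)(v') > 0`. -/
structure Event (P : PAS n A S) where
  act : A
  src : ∀ i : {j // j ∈ P.loc act}, S i.1
  tgt : ∀ i : {j // j ∈ P.loc act}, S i.1
  src_en : src ∈ P.en act
  prob_pos : 0 < P.prob act src tgt

/-- The probability attached to an event. -/
def Event.p {P : PAS n A S} (e : P.Event) : ℝ := P.prob e.act e.src e.tgt

/-- Event `e` is enabled at global state `s`. -/
def Event.enabled {P : PAS n A S} (e : P.Event) (s : ∀ i, S i) : Prop :=
  P.projA e.act s = e.src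

/-- The transition relation `s →_e s'`. -/
def Event.trans {P : PAS n A S} (e : P.Event) (s s' : ∀ i, S i) : Prop :=
  e.enabled s ∧ (∀ i : {j // j ∈ P.loc e.act}, s' i.1 = e.tgt i) ∧
    ∀ j, j ∉ P.loc e.act → s' j = s j

/-- Events are independent iff their locations are disjoint. -/
def indep {P : PAS n A S} (e e' : P.Event) : Prop :=
  P.loc e.act ∩ P.loc e'.act = ∅

/-- `u` is a step at `s`: a nonempty finite set of events, each enabled at `s`,
pairwise independent. -/
def isStep (P : PAS n A S) (u : Set P.Event) (s : ∀ i, S i) : Prop :=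
  u.Finite ∧ u.Nonempty ∧ (∀ e ∈ u, Event.enabled e s) ∧
    ∀ e ∈ u, ∀ e' ∈ u, e ≠ e' → indep e e'

/-- `u` is a maximal step at `s`. -/
def isMaxStep (P : PAS n A S) (u : Set P.Event) (s : ∀ i, S i) : Prop :=
  P.isStep u s ∧ ∀ e ∉ u, ¬ P.isStep (insert e u) s

/-- `loc(u) = ⋃_{e ∈ u} loc(e)`. -/
def locU (P : PAS n A S) (u : Set P.Event) : Set (Fin n) :=
  ⋃ e ∈ u, (P.loc e.act : Set (Fin n))

/-- `s'` is a `u`-successor of `s`. -/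
def uSucc (P : PAS n A S) (u : Set P.Event) (s s' : ∀ i, S i) : Prop :=
  (∀ e ∈ u, ∀ i : {j // j ∈ P.loc (Event.act e)}, s' i.1 = e.tgt i) ∧
    ∀ j, j ∉ P.locU u → s' j = s j

/-- `s'` is a successor of `s`. -/
def isSuccessor (P : PAS n A S) (s s' : ∀ i, S i) : Prop :=
  ∃ u, P.isMaxStep u s ∧ P.uSucc u s s'

/-- `s` is a deadlock iff no event is enabled at `s`. -/
def isDeadlock (P : PAS n A S) (s : ∀ i, S i) : Prop :=
  ¬ ∃ e : P.Event, e.enabled s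

/-- `act(x)` for a local state `x ∈ S i`. -/
def actSet (P : PAS n A S) (i : Fin n) (x : S i) : Set A :=
  {a | ∃ h : i ∈ P.loc a, ∃ v ∈ P.en a, v ⟨i, h⟩ = x}

/-- A DMC: for every agent `i` and local state `x`, `|act(x)| = 1`. -/
def isDMC (P : PAS n A S) : Prop :=
  ∀ (i : Fin n) (x : S i), ∃! a : A, a ∈ P.actSet i x


/-! When each local state of `s` admits at most one action, two enabled events that share an agent
carry the same action. An enabled event always conflicts with some event of a maximal step, so a
maximal step covers every enabled action; and since locations are nonempty it does so only once.
Hence `e ↦ e.act` is a bijection from any maximal step at `s` onto the set of actions enabled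
at `s`, and this set depends on `s` only. -/

section

variable {P : PAS n A S} {e e' : P.Event} {u : Set P.Event} {s : ∀ i, S i}

theorem Event.enabled.enabledA (he : e.enabled s) : P.enabledA e.act s :=
  Set.mem_of_eq_of_mem he e.src_en

theorem enabledA.mem_actSet {a : A} (ha : P.enabledA a s) {i : Fin n} (hi : i ∈ P.loc a) :
    a ∈ P.actSet i (s i) :=
  ⟨hi, P.projA a s, ha, rfl⟩

theorem enabledA.exists_event {a : A} (ha : P.enabledA a s) :
    ∃ e : P.Event, e.act = a ∧ e.enabled s := by
  have hsum : 0 < ∑ v', P.prob a (P.projA a s) v' := by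
    rw [P.prob_sum a _ ha]
    exact one_pos
  obtain ⟨v', -, hv'⟩ := Finset.exists_lt_of_sum_lt (Finset.sum_const_zero.trans_lt hsum)
  exact ⟨⟨a, P.projA a s, v', ha, hv'⟩, rfl, rfl⟩

theorem indep.symm (h : indep e e') : indep e' e :=
  (Finset.inter_comm _ _).trans h

theorem not_indep_of_act_eq (h : e.act = e'.act) : ¬ indep e e' := by
  rw [indep, h, Finset.inter_self]
  exact (P.loc_nonempty e'.act).ne_empty

theorem act_eq_of_not_indep (hs : ∀ i, (P.actSet i (s i)).Subsingleton) (he : e.enabled s)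
    (he' : e'.enabled s) (h : ¬ indep e e') : e.act = e'.act := by
  obtain ⟨i, hi⟩ := Finset.nonempty_iff_ne_empty.mpr h
  obtain ⟨hie, hie'⟩ := Finset.mem_inter.mp hi
  exact hs i (he.enabledA.mem_actSet hie) (he'.enabledA.mem_actSet hie')

theorem isStep.insert (hu : P.isStep u s) (he : e.enabled s) (hind : ∀ f ∈ u, indep e f) :
    P.isStep (insert e u) s := by
  obtain ⟨hfin, -, hen, hpair⟩ := hu
  refine ⟨hfin.insert e, Set.insert_nonempty e u, Set.forall_mem_insert.mpr ⟨he, hen⟩, ?_⟩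
  rintro f (rfl | hf) g (rfl | hg) hne
  · exact absurd rfl hne
  · exact hind g hg
  · exact (hind f hf).symm
  · exact hpair f hf g hg hne

theorem isStep.injOn_act (hu : P.isStep u s) : Set.InjOn Event.act u := by
  obtain ⟨-, -, -, hpair⟩ := hu
  intro e he e' he' hact
  by_contra hne
  exact not_indep_of_act_eq hact (hpair e he e' he' hne)

theorem isMaxStep.exists_not_indep (hu : P.isMaxStep u s) (he : e.enabled s) :
    ∃ f ∈ u, ¬ indep e f := by
  by_contra! hind
  have he_notMem : e ∉ u := fun heu => not_indep_of_act_eq rfl (hind e heu)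
  exact hu.2 e he_notMem (hu.1.insert he hind)

theorem isMaxStep.image_act_eq (hs : ∀ i, (P.actSet i (s i)).Subsingleton)
    (hu : P.isMaxStep u s) : Event.act '' u = {a | P.enabledA a s} := by
  obtain ⟨-, -, hen, -⟩ := hu.1
  apply Set.Subset.antisymm
  · rintro _ ⟨e, he, rfl⟩
    exact (hen e he).enabledA
  · intro a ha
    obtain ⟨e, rfl, he⟩ := enabledA.exists_event ha
    obtain ⟨f, hf, hef⟩ := hu.exists_not_indep he
    exact ⟨f, hf, (act_eq_of_not_indep hs he (hen f hf) hef).symm⟩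

theorem isMaxStep.locU_eq (hs : ∀ i, (P.actSet i (s i)).Subsingleton) (hu : P.isMaxStep u s) :
    P.locU u = ⋃ a ∈ {a | P.enabledA a s}, (P.loc a : Set (Fin n)) := by
  rw [← hu.image_act_eq hs, Set.biUnion_image, locU]

theorem isMaxStep.ncard_eq (hs : ∀ i, (P.actSet i (s i)).Subsingleton) (hu : P.isMaxStep u s) :
    u.ncard = {a | P.enabledA a s}.ncard := by
  rw [← hu.image_act_eq hs, hu.1.injOn_act.ncard_image]

theorem isDMC.subsingleton_actSet (hP : P.isDMC) (i : Fin n) (x : S i) :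
    (P.actSet i x).Subsingleton :=
  fun _ ha _ hb => (hP i x).unique ha hb

end

theorem stmt6_general (P : PAS n A S) (u u' : Set P.Event) (s : ∀ i, S i)
    (hs : ∀ i, (P.actSet i (s i)).Subsingleton)
    (hu : P.isMaxStep u s) (hu' : P.isMaxStep u' s) :
    P.locU u = P.locU u' ∧ u.ncard = u'.ncard :=
  ⟨(hu.locU_eq hs).trans (hu'.locU_eq hs).symm, (hu.ncard_eq hs).trans (hu'.ncard_eq hs).symm⟩

theorem stmt6 (P : PAS n A S) (hP : P.isDMC) (u u' : Set P.Event) (s : ∀ i, S i)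
    (hu : P.isMaxStep u s) (hu' : P.isMaxStep u' s) :
    P.locU u = P.locU u' ∧ u.ncard = u'.ncard :=
  stmt6_general P u u' s (fun i => hP.subsingleton_actSet i (s i)) hu hu'

end PAS
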